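/- arXiv:2507.06294 — 2 statements merged into one kernel-verified Lean document; each statement's English description precedes it below -/
import Mathlib

section
/- Let n ≥ 2 be an integer and q a complex number with 0 < |q| < 1. Then ((q^{2n+1};q^{2n+1})_∞ / (q;q)_∞)^3 = 1 + Σ_{m=1}^∞ q^m Σ_{l=1}^{m} (f^n_{m,l}(q)/(q;q)_l) · Σ_{k=0}^{2l} [2l choose k]_q. -/
/-! The proof pairs the Bailey chain with a conjugate Bailey pair built from the Rogers–Szegő
numbers `H_n = ∑_k [n choose k]_q`.

Iterating the Bailey chain at `a = q` on the unit Bailey pair gives the multisums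
`β_l = ∑_i q^{w(i) + Q(i)} / ((q;q)_{i_1} (q;q)_{i_2} ⋯ (q;q)_{i_n})`, where
`i_1 = l - i_2 - ⋯ - i_n` and `w(i) = ∑_{j ≥ 2} (j-1) i_j`. Up to the factor `(q;q)_l`, the
polynomial `f^n_{m,l}` collects the terms with `l + w(i) = m`, so the right-hand side of the
theorem is `∑_l q^l H_{2l} β_l`.

The series `F(s) = ∑_j q^j (1 - q^s) H_{2j+s-1} / ((q;q)_j (q;q)_{j+s})` satisfies
`F(s+2) = 2 F(s+1) - F(s)` by telescoping, and `F(0) = 0`. Hence `F(s) = s F(1)`, and `s → ∞`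
together with `H_n ~ n / (q;q)_∞` and Euler's sum yields `F(s) = s / (q;q)_∞^3`. This makes
`q^l H_{2l}` one half of a conjugate Bailey pair, and Bailey's lemma gives
`∑_l q^l H_{2l} β_l = (q;q)_∞^{-3} ∑_r (-1)^r (2r+1) q^{(2n+1) r(r+1)/2}`.

For `n = 0` the left-hand side is `1`, which is Jacobi's identity for `(q;q)_∞^3`. Applied at
`q^{2n+1}`, it evaluates the last series for every `n`. -/

open Finset

/-- Finite q-Pochhammer symbol `(a;q)_n`. -/
noncomputable def qPoch (a q : ℂ) (n : ℕ) : ℂ := ∏ j ∈ Finset.range n, (1 - a * q ^ j)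

/-- Infinite q-Pochhammer symbol `(a;q)_∞`. -/
noncomputable def qPochInf (a q : ℂ) : ℂ := ∏' j : ℕ, (1 - a * q ^ j)

/-- `1/(q;q)_a` with the convention that it is `0` for `a < 0`. -/
noncomputable def qFactInv (q : ℂ) (a : ℤ) : ℂ :=
  if 0 ≤ a then (qPoch q q a.toNat)⁻¹ else 0

/-- Gaussian binomial coefficient `[n choose k]_q`, zero unless `0 ≤ k ≤ n`. -/
noncomputable def qBinom (q : ℂ) (n k : ℤ) : ℂ :=
  if 0 ≤ k ∧ k ≤ n then qPoch q q n.toNat * qFactInv q k * qFactInv q (n - k) else 0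

/-- The polynomial `f^k_{m,l}(q)`, a sum over nonnegative integers `i_3, …, i_k`
    (here `i ⟨j⟩` represents `i_{j+3}`), with
    `i_2 := m − l − Σ_{j=3}^{k} (j−1)i_j`, `i_1 := 2l + Σ_{j=3}^{k} (j−2)i_j − m`, of
    `q^{Q(i_2,…,i_k)} (q;q)_l / ((q;q)_{i_k} ⋯ (q;q)_{i_3} (q;q)_{i_2} (q;q)_{i_1})`, where
    `Q(i_2,…,i_k) = i_k² + (i_k+i_{k−1})² + ⋯ + (i_k+⋯+i_2)²`. -/
noncomputable def fpoly (k : ℕ) (q : ℂ) (m l : ℤ) : ℂ :=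
  ∑' i : Fin (k - 2) → ℕ,
    q ^ ((∑ t ∈ Finset.range (k - 2),
            (∑ j ∈ Finset.univ.filter (fun j : Fin (k - 2) => t ≤ j.val), (i j : ℤ)) ^ 2)
         + ((m - l - ∑ j, ((j.val : ℤ) + 2) * (i j : ℤ)) + ∑ j, (i j : ℤ)) ^ 2)
    * qPoch q q l.toNat
    * (∏ j, qFactInv q (i j : ℤ))
    * qFactInv q (m - l - ∑ j, ((j.val : ℤ) + 2) * (i j : ℤ))
    * qFactInv q (2 * l + ∑ j, ((j.val : ℤ) + 1) * (i j : ℤ) - m)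

open Filter Topology

lemma hasSum_sum_antidiagonal {A M : Type*} [AddMonoid A] [HasAntidiagonal A] [AddCommMonoid M]
    [TopologicalSpace M] [ContinuousAdd M] [RegularSpace M] {f : A × A → M} {s : M}
    (hf : HasSum f s) : HasSum (fun m => ∑ p ∈ antidiagonal m, f p) s :=
  (HasAntidiagonal.sigmaAntidiagonalEquivProd.hasSum_iff.mpr hf).sigma fun m =>
    (antidiagonal m).hasSum f

/-! ### Finite `q`-Pochhammer symbols -/

section qPoch

variable (a q : ℂ)

@[simp]
lemma qPoch_zero : qPoch a q 0 = 1 := prod_range_zero _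

lemma qPoch_succ (n : ℕ) : qPoch a q (n + 1) = qPoch a q n * (1 - a * q ^ n) :=
  prod_range_succ _ n

lemma qPoch_self_succ (n : ℕ) : qPoch q q (n + 1) = qPoch q q n * (1 - q ^ (n + 1)) := by
  rw [qPoch_succ, pow_succ']

lemma qPoch_add (m n : ℕ) : qPoch a q (m + n) = qPoch a q m * qPoch (a * q ^ m) q n := by
  simp only [qPoch, prod_range_add, pow_add, mul_assoc]

lemma qPoch_succ' (n : ℕ) : qPoch a q (n + 1) = (1 - a) * qPoch (a * q) q n := by
  rw [add_comm, qPoch_add, qPoch_succ, qPoch_zero, pow_zero, pow_one, one_mul, mul_one]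

variable {a q}

lemma one_sub_mul_pow_ne_zero (h : ∀ n, qPoch a q n ≠ 0) (n : ℕ) : 1 - a * q ^ n ≠ 0 :=
  right_ne_zero_of_mul (qPoch_succ a q n ▸ h (n + 1))

lemma one_sub_pow_succ_ne_zero (h : ∀ n, qPoch q q n ≠ 0) (n : ℕ) : 1 - q ^ (n + 1) ≠ 0 :=
  pow_succ' q n ▸ one_sub_mul_pow_ne_zero h n

lemma qPoch_mul_pow_ne_zero (h : ∀ n, qPoch a q n ≠ 0) (m n : ℕ) : qPoch (a * q ^ m) q n ≠ 0 :=
  right_ne_zero_of_mul (qPoch_add a q m n ▸ h (m + n))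

lemma qPoch_self_ne_zero (hq : ‖q‖ < 1) (n : ℕ) : qPoch q q n ≠ 0 := by
  refine prod_ne_zero_iff.mpr fun j _ h => ?_
  have hpow : q ^ (j + 1) = 1 := by rw [pow_succ', ← sub_eq_zero.mp h]
  have hnorm := congrArg norm hpow
  rw [norm_pow, norm_one] at hnorm
  exact (pow_lt_one₀ (norm_nonneg q) hq j.succ_ne_zero).ne hnorm

lemma qFactInv_natCast (q : ℂ) (n : ℕ) : qFactInv q n = (qPoch q q n)⁻¹ := by simp [qFactInv]

lemma qFactInv_of_neg (q : ℂ) {n : ℤ} (hn : n < 0) : qFactInv q n = 0 := if_neg hn.not_ge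

lemma qFactInv_natCast_sub (q : ℂ) {m n : ℕ} (h : m ≤ n) :
    qFactInv q (n - m) = (qPoch q q (n - m))⁻¹ := by
  rw [← Nat.cast_sub h, qFactInv_natCast]

end qPoch

/-! ### Bailey pairs -/

/-- `(α, β)` is a Bailey pair relative to `a`. -/
def IsBaileyPair (q a : ℂ) (α β : ℕ → ℂ) : Prop :=
  ∀ L, β L = ∑ r ∈ range (L + 1), α r / (qPoch q q (L - r) * qPoch (a * q) q (L + r))

/-- `(δ, γ)` is a conjugate Bailey pair relative to `a`: `γ_r = ∑_{L ≥ r} δ_L /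
((q;q)_{L-r} (aq;q)_{L+r})`, written with `L = r + j`. -/
def IsConjugateBaileyPair (q a : ℂ) (δ γ : ℕ → ℂ) : Prop :=
  ∀ r, HasSum (fun j => δ (r + j) / (qPoch q q j * qPoch (a * q) q (2 * r + j))) (γ r)

/-- The effect on `β` of one step of the Bailey chain (Bailey's lemma with both parameters sent
to infinity). -/
noncomputable def baileyStep (q a : ℂ) (β : ℕ → ℂ) (L : ℕ) : ℂ :=
  ∑ N ∈ range (L + 1), a ^ N * q ^ N ^ 2 / qPoch q q (L - N) * β N

/-- The sequence `α` of the unit Bailey pair relative to `a`, whose `β` is `1, 0, 0, …`. -/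
noncomputable def unitAlpha (q a : ℂ) (r : ℕ) : ℂ :=
  (-1) ^ r * q ^ r.choose 2 * (1 - a * q ^ (2 * r)) / (1 - a) * (qPoch a q r / qPoch q q r)

/-- The sum `∑_t b^t q^{t²} / ((q;q)_{M-t} (q;q)_t (bq;q)_t)`, which generalises the expansion of
`1 / (q;q)_∞` by Durfee squares (`b = 1`, `M → ∞`). -/
noncomputable def durfeeSum (q b : ℂ) (M : ℕ) : ℂ :=
  ∑ t ∈ range (M + 1), b ^ t * q ^ t ^ 2 /
    (qPoch q q (M - t) * (qPoch q q t * qPoch (b * q) q t))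

section Bailey

variable {q a : ℂ} {α β δ γ : ℕ → ℂ}

-- Splits each term with `1 - q^(M+1) = (1 - q^(M+1-t)) + q^(M+1-t) * (1 - q^t)`.
lemma durfeeSum_succ (hq : ∀ n, qPoch q q n ≠ 0) (b : ℂ) (M : ℕ) :
    (1 - q ^ (M + 1)) * durfeeSum q b (M + 1)
      = durfeeSum q b M + b * q ^ (M + 1) / (1 - b * q) * durfeeSum q (b * q) M := by
  let T : ℕ → ℂ := fun t =>
    b ^ t * q ^ t ^ 2 / (qPoch q q (M + 1 - t) * (qPoch q q t * qPoch (b * q) q t))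
  have split : ∀ t ∈ range (M + 2), (1 - q ^ (M + 1)) * T t
      = (1 - q ^ (M + 1 - t)) * T t + q ^ (M + 1 - t) * (1 - q ^ t) * T t := by
    intro t ht
    rw [← pow_sub_mul_pow q (Nat.lt_succ_iff.mp (mem_range.mp ht))]
    ring
  have lower : ∀ t ∈ range (M + 1), (1 - q ^ (M + 1 - t)) * T t
      = b ^ t * q ^ t ^ 2 / (qPoch q q (M - t) * (qPoch q q t * qPoch (b * q) q t)) := by
    intro t ht
    obtain ⟨s, rfl⟩ := Nat.exists_eq_add_of_le (Nat.lt_succ_iff.mp (mem_range.mp ht))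
    have := hq s
    have := one_sub_pow_succ_ne_zero hq s
    simp only [T, add_assoc, Nat.add_sub_cancel_left, qPoch_self_succ]
    field_simp
  have upper : ∀ t ∈ range (M + 1), q ^ (M + 1 - (t + 1)) * (1 - q ^ (t + 1)) * T (t + 1)
      = b * q ^ (M + 1) / (1 - b * q) * ((b * q) ^ t * q ^ t ^ 2 /
        (qPoch q q (M - t) * (qPoch q q t * qPoch (b * q * q) q t))) := by
    intro t ht
    obtain ⟨s, rfl⟩ := Nat.exists_eq_add_of_le (Nat.lt_succ_iff.mp (mem_range.mp ht))
    have := one_sub_pow_succ_ne_zero hq t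
    simp only [T, Nat.add_sub_add_right, Nat.add_sub_cancel_left, qPoch_self_succ, qPoch_succ']
    field_simp
    ring
  rw [durfeeSum, mul_sum, sum_congr rfl split, sum_add_distrib, sum_range_succ _ (M + 1),
    sum_congr rfl lower, sum_range_succ' _ (M + 1), sum_congr rfl upper, ← mul_sum]
  simp [durfeeSum]

lemma durfeeSum_eq (hq : ∀ n, qPoch q q n ≠ 0) {b : ℂ} (hb : ∀ n, qPoch (b * q) q n ≠ 0)
    (M : ℕ) : durfeeSum q b M = 1 / (qPoch q q M * qPoch (b * q) q M) := by
  induction M generalizing b with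
  | zero => simp [durfeeSum]
  | succ M ih =>
    have hbq : ∀ n, qPoch (b * q * q) q n ≠ 0 := by
      simpa only [pow_one] using qPoch_mul_pow_ne_zero hb 1
    have hb0 : 1 - b * q ≠ 0 := by simpa using one_sub_mul_pow_ne_zero hb 0
    have hbM := one_sub_mul_pow_ne_zero hb M
    have hM := one_sub_pow_succ_ne_zero hq M
    have := hq M
    have := hb M
    have shift : qPoch (b * q * q) q M = qPoch (b * q) q M * (1 - b * q * q ^ M) / (1 - b * q) := by
      rw [eq_div_iff hb0, mul_comm, ← qPoch_succ', qPoch_succ]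
    refine mul_left_cancel₀ hM ((durfeeSum_succ hq b M).trans ?_)
    rw [ih hb, ih hbq, shift, qPoch_self_succ, qPoch_succ]
    field_simp
    ring

lemma sum_shifted_durfee_eq (hq : ∀ n, qPoch q q n ≠ 0) (ha : ∀ n, qPoch (a * q) q n ≠ 0)
    (r M : ℕ) :
    ∑ t ∈ range (M + 1), a ^ (r + t) * q ^ (r + t) ^ 2 /
        (qPoch q q (M - t) * (qPoch q q t * qPoch (a * q) q (2 * r + t)))
      = a ^ r * q ^ r ^ 2 / (qPoch q q M * qPoch (a * q) q (2 * r + M)) := by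
  have factor : ∀ t, qPoch (a * q) q (2 * r + t)
      = qPoch (a * q) q (2 * r) * qPoch (a * q ^ (2 * r) * q) q t := fun t => by
    rw [qPoch_add, mul_right_comm]
  have hb : ∀ n, qPoch (a * q ^ (2 * r) * q) q n ≠ 0 := by
    simpa only [mul_right_comm] using qPoch_mul_pow_ne_zero ha (2 * r)
  calc _ = a ^ r * q ^ r ^ 2 / qPoch (a * q) q (2 * r) * durfeeSum q (a * q ^ (2 * r)) M := by
        rw [durfeeSum, mul_sum]
        refine sum_congr rfl fun t _ => ?_
        rw [factor t]
        field_simp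
        ring
    _ = _ := by
        rw [durfeeSum_eq hq hb, factor M]
        field_simp

theorem IsBaileyPair.step (hq : ∀ n, qPoch q q n ≠ 0) (ha : ∀ n, qPoch (a * q) q n ≠ 0)
    (h : IsBaileyPair q a α β) :
    IsBaileyPair q a (fun r => a ^ r * q ^ r ^ 2 * α r) (baileyStep q a β) := by
  intro L
  calc baileyStep q a β L
      = ∑ N ∈ range (L + 1), ∑ r ∈ range (N + 1), a ^ N * q ^ N ^ 2 / qPoch q q (L - N) *
          (α r / (qPoch q q (N - r) * qPoch (a * q) q (N + r))) :=
        sum_congr rfl fun N _ => by rw [h N, mul_sum]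
    _ = ∑ r ∈ range (L + 1), ∑ N ∈ Ico r (L + 1), a ^ N * q ^ N ^ 2 / qPoch q q (L - N) *
          (α r / (qPoch q q (N - r) * qPoch (a * q) q (N + r))) :=
        sum_comm' fun N r => by simp only [mem_range, mem_Ico]; lia
    _ = ∑ r ∈ range (L + 1),
          a ^ r * q ^ r ^ 2 * α r / (qPoch q q (L - r) * qPoch (a * q) q (L + r)) := by
        refine sum_congr rfl fun r hr => ?_
        obtain ⟨M, rfl⟩ := Nat.exists_eq_add_of_le (Nat.lt_succ_iff.mp (mem_range.mp hr))
        rw [Nat.add_sub_cancel_left, show r + M + r = 2 * r + M by ring, mul_comm _ (α r),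
          mul_div_assoc, ← sum_shifted_durfee_eq hq ha r M, mul_sum, sum_Ico_eq_sum_range,
          add_assoc, Nat.add_sub_cancel_left]
        refine sum_congr rfl fun t _ => ?_
        rw [Nat.add_sub_add_left, Nat.add_sub_cancel_left, show r + t + r = 2 * r + t by ring]
        field_simp

theorem IsBaileyPair.iterate (hq : ∀ n, qPoch q q n ≠ 0) (ha : ∀ n, qPoch (a * q) q n ≠ 0)
    (h : IsBaileyPair q a α β) (n : ℕ) :
    IsBaileyPair q a (fun r => (a ^ r * q ^ r ^ 2) ^ n * α r) ((baileyStep q a)^[n] β) := by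
  induction n with
  | zero => simpa using h
  | succ n ih =>
    rw [Function.iterate_succ_apply']
    simpa only [pow_succ', mul_assoc] using ih.step hq ha

-- At `R = M + 1` the right side is minus the last term of the unit Bailey pair relation.
lemma sum_unitAlpha_div (hq : ∀ n, qPoch q q n ≠ 0) (ha : ∀ n, qPoch (a * q) q n ≠ 0)
    (ha1 : a ≠ 1) {M R : ℕ} (hR : R ≤ M + 1) :
    (1 - q ^ (M + 1)) * ∑ r ∈ range R,
        unitAlpha q a r / (qPoch q q (M + 1 - r) * qPoch (a * q) q (M + 1 + r))
      = -((-1) ^ R * q ^ R.choose 2 * (1 - q ^ R) / (1 - a) * (qPoch a q R / qPoch q q R)) /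
        (qPoch q q (M + 1 - R) * qPoch (a * q) q (M + R)) := by
  induction R with
  | zero => simp
  | succ R ih =>
    obtain ⟨s, rfl⟩ := Nat.exists_eq_add_of_le (Nat.le_of_succ_le_succ hR)
    have := hq s
    have := hq R
    have := ha (R + s + R)
    have := one_sub_pow_succ_ne_zero hq s
    have := one_sub_pow_succ_ne_zero hq R
    have := one_sub_mul_pow_ne_zero ha (R + s + R)
    have := sub_ne_zero.mpr ha1.symm
    rw [sum_range_succ, mul_add, ih (by lia), unitAlpha, Nat.add_sub_add_right,
      Nat.add_sub_cancel_left, show R + s + 1 - R = s + 1 by lia,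
      show R + s + 1 + R = R + s + R + 1 by ring, ← add_assoc (R + s) R 1, qPoch_self_succ q s,
      qPoch_self_succ q R, qPoch_succ (a * q), qPoch_succ a q R, Nat.choose_succ_succ R 1,
      Nat.choose_one_right]
    field_simp
    ring

theorem isBaileyPair_unit (hq : ∀ n, qPoch q q n ≠ 0) (ha : ∀ n, qPoch (a * q) q n ≠ 0)
    (ha1 : a ≠ 1) : IsBaileyPair q a (unitAlpha q a) (Pi.single 0 1) := by
  have ha1' := sub_ne_zero.mpr ha1.symm
  rintro (_ | M)
  · simp [unitAlpha, div_self ha1']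
  · have hM := one_sub_pow_succ_ne_zero hq M
    have := hq M
    have := hq (M + 1)
    have := ha (M + 1 + M)
    have := one_sub_mul_pow_ne_zero ha (M + 1 + M)
    refine mul_left_cancel₀ hM ?_
    rw [sum_range_succ, mul_add, sum_unitAlpha_div hq ha ha1 le_rfl, Nat.sub_self, qPoch_zero,
      unitAlpha, ← add_assoc (M + 1) M 1, add_comm M (M + 1), qPoch_succ (a * q) _ (M + 1 + M),
      Pi.single_eq_of_ne M.succ_ne_zero]
    field_simp
    ring

theorem IsBaileyPair.tsum_mul_eq (h : IsBaileyPair q a α β) (h' : IsConjugateBaileyPair q a δ γ)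
    (hs : Summable fun p : ℕ × ℕ =>
      α p.1 * (δ (p.1 + p.2) / (qPoch q q p.2 * qPoch (a * q) q (2 * p.1 + p.2)))) :
    ∑' L, β L * δ L = ∑' r, α r * γ r := by
  calc ∑' L, β L * δ L
      = ∑' L, ∑ p ∈ antidiagonal L,
          α p.1 * (δ (p.1 + p.2) / (qPoch q q p.2 * qPoch (a * q) q (2 * p.1 + p.2))) := by
        refine tsum_congr fun L => ?_
        rw [h L, sum_mul, ← Nat.sum_antidiagonal_eq_sum_range_succ
          fun r j => α r / (qPoch q q j * qPoch (a * q) q (L + r)) * δ L]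
        refine sum_congr rfl fun p hp => ?_
        rw [← mem_antidiagonal.mp hp, show p.1 + p.2 + p.1 = 2 * p.1 + p.2 by ring]
        ring
    _ = ∑' p : ℕ × ℕ,
          α p.1 * (δ (p.1 + p.2) / (qPoch q q p.2 * qPoch (a * q) q (2 * p.1 + p.2))) :=
        (hasSum_sum_antidiagonal hs.hasSum).tsum_eq
    _ = ∑' r, α r * γ r := by
        rw [hs.tsum_prod]
        exact tsum_congr fun r => ((h' r).mul_left (α r)).tsum_eq

end Bailey

/-! ### Rogers–Szegő polynomials -/

/-- The Rogers–Szegő polynomial `∑_k [n choose k]_q z^k` at `z = 1`. -/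
noncomputable def rogersSzego (q : ℂ) (n : ℕ) : ℂ := ∑ k ∈ range (n + 1), qBinom q n k

section RogersSzego

variable {q : ℂ}

lemma rogersSzego_eq_sum_antidiagonal (q : ℂ) (n : ℕ) : rogersSzego q n
    = qPoch q q n * ∑ p ∈ antidiagonal n, (qPoch q q p.1)⁻¹ * (qPoch q q p.2)⁻¹ := by
  rw [Nat.sum_antidiagonal_eq_sum_range_succ fun i j => (qPoch q q i)⁻¹ * (qPoch q q j)⁻¹, mul_sum]
  refine sum_congr rfl fun k hk => ?_
  have hk : k ≤ n := Nat.lt_succ_iff.mp (mem_range.mp hk)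
  rw [qBinom, if_pos ⟨by positivity, by exact_mod_cast hk⟩, ← Nat.cast_sub hk, Int.toNat_natCast,
    qFactInv_natCast, qFactInv_natCast, mul_assoc]

-- The generating function `U(x) = ∑ x^k / (q;q)_k` satisfies `U(qx) = (1 - x) U(x)`; the
-- recurrence is the square of this equation.
lemma rogersSzego_succ (hq : ∀ n, qPoch q q n ≠ 0) (n : ℕ) :
    rogersSzego q (n + 1) = 2 * rogersSzego q n - (1 - q ^ n) * rogersSzego q (n - 1) := by
  let U : PowerSeries ℂ := .mk fun k => (qPoch q q k)⁻¹
  have coeff_sq : ∀ k, PowerSeries.coeff k (U * U)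
      = ∑ p ∈ antidiagonal k, (qPoch q q p.1)⁻¹ * (qPoch q q p.2)⁻¹ := fun k => by
    simp only [PowerSeries.coeff_mul, U, PowerSeries.coeff_mk]
  have functional_eq : PowerSeries.rescale q U = U - PowerSeries.X * U := by
    ext (_ | k)
    · simp [U]
    · have := hq k
      have := one_sub_pow_succ_ne_zero hq k
      simp only [PowerSeries.coeff_rescale, map_sub, PowerSeries.coeff_succ_X_mul, U,
        PowerSeries.coeff_mk, qPoch_self_succ]
      field_simp
      ring
  have squared : PowerSeries.rescale q (U * U) = U * U - PowerSeries.X * (U * U)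
      - PowerSeries.X * (U * U) + PowerSeries.X * (PowerSeries.X * (U * U)) := by
    rw [map_mul, functional_eq]
    ring
  have h := congrArg (PowerSeries.coeff (n + 1)) squared
  simp only [rogersSzego_eq_sum_antidiagonal, ← coeff_sq]
  rcases n with _ | n
  all_goals
    simp only [PowerSeries.coeff_rescale, map_add, map_sub, PowerSeries.coeff_succ_X_mul,
      PowerSeries.coeff_zero_X_mul, Nat.add_sub_cancel, qPoch_self_succ] at h ⊢
  · linear_combination -qPoch q q 0 * h
  · linear_combination -(qPoch q q n * (1 - q ^ (n + 1))) * h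

end RogersSzego

/-! ### Asymptotics -/

lemma tendsto_average_antidiagonal {R : Type*} [NormedRing R] [NormedSpace ℝ R] {u v : ℕ → R}
    {U V : R} (hu : Tendsto u atTop (𝓝 U)) (hv : Tendsto v atTop (𝓝 V)) :
    Tendsto (fun n : ℕ => ((n + 1 : ℕ) : ℝ)⁻¹ • ∑ p ∈ antidiagonal n, u p.1 * v p.2) atTop
      (𝓝 (U * V)) := by
  obtain ⟨C, hC⟩ := (Metric.isBounded_range_of_tendsto v hv).exists_norm_le
  replace hC : ∀ n, ‖v n‖ ≤ C := fun n => hC _ ⟨n, rfl⟩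
  have deviation : Tendsto (fun k => ‖u k - U‖ * C + ‖U‖ * ‖v k - V‖) atTop (𝓝 0) := by
    simpa using ((tendsto_iff_norm_sub_tendsto_zero.mp hu).mul_const C).add
      ((tendsto_iff_norm_sub_tendsto_zero.mp hv).const_mul ‖U‖)
  refine tendsto_iff_norm_sub_tendsto_zero.mpr <| squeeze_zero (fun _ => norm_nonneg _)
    (fun n => ?_) ((tendsto_add_atTop_iff_nat 1).mpr deviation.cesaro)
  have average_sub : ((n + 1 : ℕ) : ℝ)⁻¹ • ∑ p ∈ antidiagonal n, u p.1 * v p.2 - U * V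
      = ((n + 1 : ℕ) : ℝ)⁻¹ • ∑ p ∈ antidiagonal n, (u p.1 * v p.2 - U * V) := by
    rw [sum_sub_distrib, sum_const, Nat.card_antidiagonal, ← Nat.cast_smul_eq_nsmul ℝ, smul_sub,
      inv_smul_smul₀ (by positivity)]
  rw [average_sub, norm_smul, norm_inv, Real.norm_natCast]
  gcongr
  calc ‖∑ p ∈ antidiagonal n, (u p.1 * v p.2 - U * V)‖
      ≤ ∑ p ∈ antidiagonal n, (‖u p.1 - U‖ * C + ‖U‖ * ‖v p.2 - V‖) := by
        refine norm_sum_le_of_le _ fun p _ => ?_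
        rw [show u p.1 * v p.2 - U * V = (u p.1 - U) * v p.2 + U * (v p.2 - V) by noncomm_ring]
        refine (norm_add_le _ _).trans (add_le_add ((norm_mul_le _ _).trans ?_) (norm_mul_le _ _))
        gcongr
        exact hC p.2
    _ = ∑ k ∈ range (n + 1), (‖u k - U‖ * C + ‖U‖ * ‖v k - V‖) := by
        rw [sum_add_distrib, sum_add_distrib, ← Nat.sum_antidiagonal_swap
          (f := fun p : ℕ × ℕ => ‖U‖ * ‖v p.2 - V‖)]
        simp only [Prod.snd_swap, Nat.sum_antidiagonal_eq_sum_range_succ_mk]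

lemma summable_add_one_pow_mul_geometric {r : ℝ} (h0 : 0 ≤ r) (h1 : r < 1) (k : ℕ) :
    Summable fun j : ℕ => ((j : ℝ) + 1) ^ k * r ^ j := by
  have h := summable_pow_mul_geometric_of_norm_lt_one (R := ℝ) k (r := r)
    (by rwa [Real.norm_of_nonneg h0])
  rcases h0.eq_or_lt with rfl | h0
  · exact summable_of_hasFiniteSupport ((Set.finite_singleton 0).subset fun j hj => by
      simp_all)
  · exact (((summable_nat_add_iff 1).mpr h).mul_right r⁻¹).congr fun j => by
      push_cast
      field_simp
      ring

section Asymptotics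

variable {q : ℂ} (hq : ‖q‖ < 1)

include hq

lemma qPochInf_self_ne_zero : qPochInf q q ≠ 0 := by
  simp only [qPochInf, sub_eq_add_neg]
  refine tprod_one_add_ne_zero_of_summable (fun j => ?_) ?_
  · simpa only [← sub_eq_add_neg] using one_sub_mul_pow_ne_zero (qPoch_self_ne_zero hq) j
  · simpa only [norm_neg, norm_mul, norm_pow] using
      (summable_geometric_of_lt_one (norm_nonneg q) hq).mul_left ‖q‖

lemma tendsto_qPoch (a : ℂ) : Tendsto (qPoch a q) atTop (𝓝 (qPochInf a q)) := by
  have h : Multipliable fun j : ℕ => 1 + -(a * q ^ j) := multipliable_one_add_of_summable <| by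
    simpa only [norm_neg, norm_mul, norm_pow] using
      (summable_geometric_of_lt_one (norm_nonneg q) hq).mul_left ‖a‖
  simp only [← sub_eq_add_neg] at h
  exact h.hasProd.tendsto_prod_nat

lemma tendsto_inv_qPoch_self :
    Tendsto (fun n => (qPoch q q n)⁻¹) atTop (𝓝 (qPochInf q q)⁻¹) :=
  (tendsto_qPoch hq q).inv₀ (qPochInf_self_ne_zero hq)

lemma exists_norm_inv_qPoch_self_le : ∃ B, ∀ n, ‖(qPoch q q n)⁻¹‖ ≤ B := by
  obtain ⟨B, hB⟩ :=
    (Metric.isBounded_range_of_tendsto _ (tendsto_inv_qPoch_self hq)).exists_norm_le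
  exact ⟨B, fun n => hB _ ⟨n, rfl⟩⟩

lemma tendsto_rogersSzego_div :
    Tendsto (fun n : ℕ => rogersSzego q n / (n + 1)) atTop (𝓝 (qPochInf q q)⁻¹) := by
  have h := (tendsto_qPoch hq q).mul
    (tendsto_average_antidiagonal (tendsto_inv_qPoch_self hq) (tendsto_inv_qPoch_self hq))
  rw [mul_inv_cancel_left₀ (qPochInf_self_ne_zero hq)] at h
  refine h.congr fun n => ?_
  rw [rogersSzego_eq_sum_antidiagonal, Complex.real_smul]
  push_cast
  ring

lemma exists_norm_rogersSzego_le : ∃ C, ∀ n : ℕ, ‖rogersSzego q n‖ ≤ C * (n + 1) := by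
  obtain ⟨C, hC⟩ :=
    (Metric.isBounded_range_of_tendsto _ (tendsto_rogersSzego_div hq)).exists_norm_le
  refine ⟨C, fun n => ?_⟩
  have h := hC _ ⟨n, rfl⟩
  rwa [norm_div, ← Nat.cast_add_one, Complex.norm_natCast, div_le_iff₀ (by positivity),
    Nat.cast_add_one] at h

lemma hasSum_pow_div_qPoch : HasSum (fun j => q ^ j / qPoch q q j) (qPochInf q q)⁻¹ := by
  obtain ⟨B, hB⟩ := exists_norm_inv_qPoch_self_le hq
  have summable : Summable fun j => q ^ j / qPoch q q j :=
    .of_norm_bounded ((summable_geometric_of_lt_one (norm_nonneg q) hq).mul_right B) fun j => by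
      rw [div_eq_mul_inv, norm_mul, norm_pow]
      gcongr
      exact hB j
  have partial_sum : ∀ J, ∑ j ∈ range (J + 1), q ^ j / qPoch q q j = (qPoch q q J)⁻¹ := by
    intro J
    induction J with
    | zero => simp
    | succ J ih =>
      have := qPoch_self_ne_zero hq J
      have := one_sub_pow_succ_ne_zero (qPoch_self_ne_zero hq) J
      rw [sum_range_succ, ih, qPoch_self_succ]
      field_simp
      ring
  have h := (tendsto_add_atTop_iff_nat 1).mpr summable.hasSum.tendsto_sum_nat
  simp only [partial_sum] at h
  exact tendsto_nhds_unique h (tendsto_inv_qPoch_self hq) ▸ summable.hasSum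

end Asymptotics

/-! ### The conjugate Bailey pair -/

/-- The summand of `∑_j q^j (1 - q^s) H_{2j+s-1} / ((q;q)_j (q;q)_{j+s})`, where `H_n` are the
Rogers–Szegő polynomials at `1`. The truncated subtraction is harmless: at `s = 0` the factor
`1 - q^s` vanishes. -/
noncomputable def conjTerm (q : ℂ) (s j : ℕ) : ℂ :=
  q ^ j * (1 - q ^ s) * rogersSzego q (2 * j + s - 1) / (qPoch q q j * qPoch q q (j + s))

section Conjugate

variable {q : ℂ}

lemma conjTerm_zero (q : ℂ) : conjTerm q 0 = 0 := by
  funext j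
  simp [conjTerm]

lemma conjTerm_succ (q : ℂ) (s j : ℕ) : conjTerm q (s + 1) j = q ^ j * (1 - q ^ (s + 1)) *
    rogersSzego q (2 * j + s) / (qPoch q q j * qPoch q q (j + s + 1)) := rfl

lemma sum_conjTerm_second_difference (hq : ∀ n, qPoch q q n ≠ 0) (s J : ℕ) :
    ∑ j ∈ range (J + 1), (conjTerm q (s + 2) j - 2 * conjTerm q (s + 1) j + conjTerm q s j)
      = q ^ (s + 1) * (1 - q + q ^ (J + 1) - q ^ (J + s + 2)) / (1 - q ^ (s + 2))
        * conjTerm q (s + 2) J := by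
  have hs₀ := one_sub_pow_succ_ne_zero hq s
  have hs₁ := one_sub_pow_succ_ne_zero hq (s + 1)
  induction J with
  | zero =>
    have := hq s
    have hH := rogersSzego_succ hq s
    simp only [zero_add, range_one, sum_singleton, conjTerm, mul_zero, Nat.add_sub_cancel,
      show s + 2 - 1 = s + 1 by lia, qPoch_self_succ, qPoch_zero, hH]
    field_simp
    ring
  | succ J ih =>
    have := hq J
    have := hq (J + s)
    have := one_sub_pow_succ_ne_zero hq J
    have := one_sub_pow_succ_ne_zero hq (J + s)
    have := one_sub_pow_succ_ne_zero hq (J + s + 1)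
    have := one_sub_pow_succ_ne_zero hq (J + s + 2)
    have hH := rogersSzego_succ hq (2 * J + s + 2)
    rw [sum_range_succ, ih]
    simp only [conjTerm, show 2 * (J + 1) + (s + 2) - 1 = 2 * J + s + 2 + 1 by lia, hH,
      show 2 * (J + 1) + (s + 1) - 1 = 2 * J + s + 2 by lia,
      show 2 * (J + 1) + s - 1 = 2 * J + s + 1 by lia,
      show 2 * J + (s + 2) - 1 = 2 * J + s + 1 by lia,
      show 2 * J + s + 2 - 1 = 2 * J + s + 1 by lia,
      show J + 1 + (s + 2) = J + s + 2 + 1 by ring, show J + 1 + (s + 1) = J + s + 1 + 1 by ring,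
      show J + 1 + s = J + s + 1 by ring, show J + (s + 2) = J + s + 1 + 1 by ring,
      qPoch_self_succ]
    field_simp
    ring

variable (hq : ‖q‖ < 1)

include hq

lemma norm_one_sub_pow_le (n : ℕ) : ‖1 - q ^ n‖ ≤ 2 := by
  calc ‖1 - q ^ n‖ ≤ ‖(1 : ℂ)‖ + ‖q ^ n‖ := norm_sub_le _ _
    _ ≤ 1 + 1 := by
        rw [norm_one, norm_pow]
        gcongr
        exact pow_le_one₀ (norm_nonneg q) hq.le
    _ = 2 := one_add_one_eq_two

lemma exists_norm_conjTerm_le : ∃ C, ∀ s j : ℕ,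
    ‖conjTerm q (s + 1) j‖ ≤ C * ((s + 1) * ((j + 1) * ‖q‖ ^ j)) := by
  obtain ⟨B, hB⟩ := exists_norm_inv_qPoch_self_le hq
  obtain ⟨C, hC⟩ := exists_norm_rogersSzego_le hq
  have hB₀ : 0 ≤ B := (norm_nonneg _).trans (hB 0)
  have hC₀ : 0 ≤ C := by simpa using (norm_nonneg _).trans (hC 0)
  have hH : ∀ s j : ℕ, ‖rogersSzego q (2 * j + s)‖ ≤ C * (2 * ((s + 1) * (j + 1))) := by
    intro s j
    refine (hC _).trans (mul_le_mul_of_nonneg_left ?_ hC₀)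
    norm_cast
    nlinarith
  refine ⟨4 * C * B ^ 2, fun s j => ?_⟩
  calc ‖conjTerm q (s + 1) j‖
      = ‖q‖ ^ j * ‖1 - q ^ (s + 1)‖ * ‖rogersSzego q (2 * j + s)‖
          * (‖(qPoch q q j)⁻¹‖ * ‖(qPoch q q (j + s + 1))⁻¹‖) := by
        rw [conjTerm_succ, div_eq_mul_inv, mul_inv, norm_mul, norm_mul, norm_mul, norm_mul,
          norm_pow]
    _ ≤ ‖q‖ ^ j * 2 * (C * (2 * ((s + 1) * (j + 1)))) * (B * B) := by
        gcongr
        exacts [norm_one_sub_pow_le hq _, hH s j, hB _, hB _]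
    _ = _ := by ring

lemma summable_conjTerm (s : ℕ) : Summable (conjTerm q s) := by
  rcases s with _ | s
  · exact conjTerm_zero q ▸ summable_zero
  obtain ⟨C, hC⟩ := exists_norm_conjTerm_le hq
  refine .of_norm_bounded (g := fun j : ℕ => C * ((s + 1) * ((j + 1) * ‖q‖ ^ j))) ?_ (hC s)
  simpa using ((summable_add_one_pow_mul_geometric (norm_nonneg q) hq 1).mul_left _).mul_left C

lemma tsum_conjTerm_add_two (s : ℕ) : ∑' j, conjTerm q (s + 2) j
    = 2 * ∑' j, conjTerm q (s + 1) j - ∑' j, conjTerm q s j := by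
  have hasSum := (((summable_conjTerm hq (s + 2)).hasSum.sub
    ((summable_conjTerm hq (s + 1)).hasSum.mul_left 2)).add (summable_conjTerm hq s).hasSum)
  have hpow : ∀ k, Tendsto (fun J => q ^ (J + k)) atTop (𝓝 0) := fun k =>
    (tendsto_add_atTop_iff_nat k).mpr (tendsto_pow_atTop_nhds_zero_of_norm_lt_one hq)
  have boundary : Tendsto (fun J => q ^ (s + 1) * (1 - q + q ^ (J + 1) - q ^ (J + s + 2)) /
      (1 - q ^ (s + 2)) * conjTerm q (s + 2) J) atTop (𝓝 0) := by
    have factor := ((hpow 1).const_add (1 - q)).sub (hpow (s + 2))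
    simpa only [mul_zero, ← add_assoc] using ((factor.const_mul (q ^ (s + 1))).div_const
      (1 - q ^ (s + 2))).mul (summable_conjTerm hq (s + 2)).tendsto_atTop_zero
  have partial_sum := (tendsto_add_atTop_iff_nat 1).mpr hasSum.tendsto_sum_nat
  simp only [sum_conjTerm_second_difference (qPoch_self_ne_zero hq)] at partial_sum
  linear_combination tendsto_nhds_unique partial_sum boundary

lemma tsum_conjTerm_eq_mul (s : ℕ) : ∑' j, conjTerm q s j = s * ∑' j, conjTerm q 1 j := by
  induction s using Nat.twoStepInduction with
  | zero => simp [conjTerm_zero]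
  | one => simp
  | more s ih₀ ih₁ =>
    rw [tsum_conjTerm_add_two hq, ih₀, ih₁]
    push_cast
    ring

lemma tendsto_conjTerm_div (j : ℕ) :
    Tendsto (fun s : ℕ => conjTerm q (s + 1) j / (s + 1)) atTop
      (𝓝 (q ^ j / qPoch q q j * (qPochInf q q)⁻¹ ^ 2)) := by
  have hH : Tendsto (fun s : ℕ => rogersSzego q (s + 2 * j) / ((s + 2 * j : ℕ) + 1)) atTop
      (𝓝 (qPochInf q q)⁻¹) := (tendsto_add_atTop_iff_nat (2 * j)).mpr (tendsto_rogersSzego_div hq)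
  have hratio : Tendsto (fun s : ℕ => ((2 * j + 1 : ℂ) + 1 * s) / (1 + 1 * s)) atTop
      (𝓝 (1 / 1)) := tendsto_add_mul_div_add_mul_atTop_nhds _ _ _ one_ne_zero
  have hP : Tendsto (fun s => (qPoch q q (s + (j + 1)))⁻¹) atTop (𝓝 (qPochInf q q)⁻¹) :=
    (tendsto_add_atTop_iff_nat (j + 1)).mpr (tendsto_inv_qPoch_self hq)
  have hpow : Tendsto (fun s => 1 - q ^ (s + 1)) atTop (𝓝 (1 - 0)) :=
    ((tendsto_add_atTop_iff_nat 1).mpr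
      (tendsto_pow_atTop_nhds_zero_of_norm_lt_one hq)).const_sub 1
  have h := (((hH.mul hratio).mul hP).mul hpow).const_mul (q ^ j / qPoch q q j)
  rw [div_one, mul_one, sub_zero, mul_one, ← sq] at h
  refine h.congr fun s => ?_
  have : (s : ℂ) + 1 ≠ 0 := Nat.cast_add_one_ne_zero s
  have : ((s + 2 * j : ℕ) : ℂ) + 1 ≠ 0 := Nat.cast_add_one_ne_zero _
  have hcast : (2 * j + 1 : ℂ) + 1 * s = (s + 2 * j : ℕ) + 1 := by push_cast; ring
  rw [conjTerm_succ, hcast, one_mul, add_comm (1 : ℂ), add_comm (2 * j),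
    show j + s + 1 = s + (j + 1) by ring]
  field_simp

/-- The recurrence in `s` leaves one free constant, found by letting `s → ∞`. -/
lemma tsum_conjTerm (s : ℕ) : ∑' j, conjTerm q s j = s * (qPochInf q q)⁻¹ ^ 3 := by
  obtain ⟨C, hC⟩ := exists_norm_conjTerm_le hq
  have summable_bound : Summable fun j : ℕ => C * ((j + 1) * ‖q‖ ^ j) := by
    simpa using (summable_add_one_pow_mul_geometric (norm_nonneg q) hq 1).mul_left C
  have hlim : Tendsto (fun s : ℕ => ∑' j, conjTerm q (s + 1) j / (s + 1)) atTop
      (𝓝 (∑' j, q ^ j / qPoch q q j * (qPochInf q q)⁻¹ ^ 2)) := by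
    refine tendsto_tsum_of_dominated_convergence summable_bound (tendsto_conjTerm_div hq)
      (Eventually.of_forall fun s j => ?_)
    rw [norm_div, ← Nat.cast_add_one, Complex.norm_natCast, div_le_iff₀ (by positivity)]
    refine (hC s j).trans_eq ?_
    push_cast
    ring
  have hconst : ∀ s : ℕ, ∑' j, conjTerm q (s + 1) j / (s + 1) = ∑' j, conjTerm q 1 j := by
    intro s
    have : (s : ℂ) + 1 ≠ 0 := Nat.cast_add_one_ne_zero s
    rw [tsum_div_const, tsum_conjTerm_eq_mul hq, Nat.cast_add_one, mul_div_cancel_left₀ _ this]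
  simp only [hconst] at hlim
  rw [tsum_conjTerm_eq_mul hq, tendsto_nhds_unique tendsto_const_nhds hlim, tsum_mul_right,
    (hasSum_pow_div_qPoch hq).tsum_eq]
  ring

end Conjugate

/-! ### Jacobi's identity -/

lemma two_mul_succ_choose_two (r : ℕ) : 2 * (r + 1).choose 2 = r + r ^ 2 := by
  have h := Nat.add_one_mul_choose_eq r 1
  rw [Nat.choose_one_right] at h
  linarith

/-- The terms of Jacobi's series `∑_r (-1)^r (2r+1) x^{r(r+1)/2}` for `(x;x)_∞^3`. -/
noncomputable def jacobiTerm (x : ℂ) (r : ℕ) : ℂ :=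
  (-1) ^ r * (2 * r + 1) * x ^ (r + 1).choose 2

section RogersSzegoPair

variable {q : ℂ} (hq : ‖q‖ < 1)

include hq

lemma one_sub_self_ne_zero : 1 - q ≠ 0 := by
  simpa using one_sub_pow_succ_ne_zero (qPoch_self_ne_zero hq) 0

lemma qPoch_mul_self_ne_zero (n : ℕ) : qPoch (q * q) q n ≠ 0 := by
  simpa using qPoch_mul_pow_ne_zero (qPoch_self_ne_zero hq) 1 n

lemma rogersSzego_div_eq_conjTerm (r j : ℕ) :
    q ^ (r + j) * rogersSzego q (2 * (r + j)) / (qPoch q q j * qPoch (q * q) q (2 * r + j))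
      = q ^ r * (1 - q) / (1 - q ^ (2 * r + 1)) * conjTerm q (2 * r + 1) j := by
  have := one_sub_self_ne_zero hq
  have := one_sub_pow_succ_ne_zero (qPoch_self_ne_zero hq) (2 * r)
  have := qPoch_mul_self_ne_zero hq (2 * r + j)
  rw [conjTerm_succ, add_comm j, qPoch_succ', ← mul_add, add_comm j]
  field_simp
  ring

theorem isConjugateBaileyPair_rogersSzego :
    IsConjugateBaileyPair q q (fun l => q ^ l * rogersSzego q (2 * l)) fun r =>
      q ^ r * (1 - q) / (1 - q ^ (2 * r + 1)) * ((2 * r + 1) * (qPochInf q q)⁻¹ ^ 3) := by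
  intro r
  have h := (summable_conjTerm hq (2 * r + 1)).hasSum
  rw [tsum_conjTerm hq] at h
  push_cast at h
  simpa only [rogersSzego_div_eq_conjTerm hq] using h.mul_left _

lemma iterate_unitAlpha_mul (n r : ℕ) (c : ℂ) :
    (q ^ r * q ^ r ^ 2) ^ n * unitAlpha q q r * (q ^ r * (1 - q) / (1 - q ^ (2 * r + 1)) * c)
      = (-1) ^ r * (q ^ (2 * n + 1)) ^ (r + 1).choose 2 * c := by
  have := one_sub_self_ne_zero hq
  have := one_sub_pow_succ_ne_zero (qPoch_self_ne_zero hq) (2 * r)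
  rw [unitAlpha, div_self (qPoch_self_ne_zero hq r), ← pow_succ', ← pow_add,
    ← two_mul_succ_choose_two, ← pow_mul, ← pow_mul,
    show (2 * n + 1) * (r + 1).choose 2 = 2 * (r + 1).choose 2 * n + r.choose 2 + r by
      rw [Nat.choose_succ_succ, Nat.choose_one_right]; ring]
  field_simp
  ring

lemma summable_iterate_unitAlpha_mul (n : ℕ) : Summable fun p : ℕ × ℕ =>
    (-1) ^ p.1 * (q ^ (2 * n + 1)) ^ (p.1 + 1).choose 2 * conjTerm q (2 * p.1 + 1) p.2 := by
  obtain ⟨C, hC⟩ := exists_norm_conjTerm_le hq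
  have hsum := summable_add_one_pow_mul_geometric (norm_nonneg q) hq 1
  refine .of_norm_bounded ((hsum.mul_of_nonneg hsum (fun r => by positivity)
    fun j => by positivity).mul_left (2 * C)) fun ⟨r, j⟩ => ?_
  have hexp : r ≤ (2 * n + 1) * (r + 1).choose 2 := by
    rw [Nat.choose_succ_succ, Nat.choose_one_right]
    nlinarith
  calc ‖(-1) ^ r * (q ^ (2 * n + 1)) ^ (r + 1).choose 2 * conjTerm q (2 * r + 1) j‖
      = ‖q‖ ^ ((2 * n + 1) * (r + 1).choose 2) * ‖conjTerm q (2 * r + 1) j‖ := by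
        rw [norm_mul, norm_mul, norm_pow, norm_neg, norm_one, one_pow, one_mul, ← pow_mul,
          norm_pow]
    _ ≤ ‖q‖ ^ r * (C * (((2 * r : ℕ) + 1) * ((j + 1) * ‖q‖ ^ j))) :=
        mul_le_mul (pow_le_pow_of_le_one (norm_nonneg q) hq.le hexp) (hC _ j) (norm_nonneg _)
          (by positivity)
    _ ≤ ‖q‖ ^ r * (C * ((2 * (r + 1)) * ((j + 1) * ‖q‖ ^ j))) := by
        have : 0 ≤ C := by simpa using (norm_nonneg _).trans (hC 0 0)
        gcongr
        push_cast
        linarith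
    _ = _ := by ring

theorem tsum_iterate_baileyStep_mul_rogersSzego (n : ℕ) :
    ∑' l, (baileyStep q q)^[n] (Pi.single 0 1) l * (q ^ l * rogersSzego q (2 * l))
      = (qPochInf q q)⁻¹ ^ 3 * ∑' r, jacobiTerm (q ^ (2 * n + 1)) r := by
  have hq0 := qPoch_self_ne_zero hq
  have hqq := qPoch_mul_self_ne_zero hq
  have pair := (isBaileyPair_unit hq0 hqq (sub_ne_zero.mp (one_sub_self_ne_zero hq)).symm).iterate
    hq0 hqq n
  rw [pair.tsum_mul_eq (isConjugateBaileyPair_rogersSzego hq), ← tsum_mul_left]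
  · refine tsum_congr fun r => ?_
    rw [iterate_unitAlpha_mul hq, jacobiTerm]
    ring
  · simpa only [rogersSzego_div_eq_conjTerm hq, iterate_unitAlpha_mul hq] using
      summable_iterate_unitAlpha_mul hq n

theorem qPochInf_self_pow_three : qPochInf q q ^ 3 = ∑' r, jacobiTerm q r := by
  have h := tsum_iterate_baileyStep_mul_rogersSzego hq 0
  rw [tsum_eq_single 0 fun l hl => by simp [Pi.single_eq_of_ne hl], mul_zero, zero_add,
    pow_one] at h
  simpa [rogersSzego, qBinom, qFactInv, inv_pow, eq_inv_mul_iff_mul_eq₀,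
    qPochInf_self_ne_zero hq] using h

theorem tsum_iterate_baileyStep_mul_rogersSzego_eq_div (n : ℕ) :
    ∑' l, (baileyStep q q)^[n] (Pi.single 0 1) l * (q ^ l * rogersSzego q (2 * l))
      = (qPochInf (q ^ (2 * n + 1)) (q ^ (2 * n + 1)) / qPochInf q q) ^ 3 := by
  have hqn : ‖q ^ (2 * n + 1)‖ < 1 := by
    simpa only [norm_pow] using pow_lt_one₀ (norm_nonneg q) hq (2 * n).succ_ne_zero
  rw [tsum_iterate_baileyStep_mul_rogersSzego hq, div_pow, qPochInf_self_pow_three hqn, inv_pow,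
    div_eq_inv_mul]

end RogersSzegoPair

/-! ### Multisums -/

/-- The weight `∑_j (j+1) i_j`; it is the sum of the entries of the chain
`i_0 + ⋯ + i_{D-1} ≥ i_1 + ⋯ + i_{D-1} ≥ ⋯ ≥ i_{D-1}`. -/
def chainWeight {D : ℕ} (i : Fin D → ℕ) : ℕ := ∑ j, (j.val + 1) * i j

/-- The sum of the squares of the entries of the chain
`i_0 + ⋯ + i_{D-1} ≥ i_1 + ⋯ + i_{D-1} ≥ ⋯ ≥ i_{D-1}`. -/
def chainSqNorm {D : ℕ} (i : Fin D → ℕ) : ℕ := ∑ t ∈ range D, (∑ j with t ≤ j.val, i j) ^ 2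

/-- The summand `q^{Q(i)} / ((q;q)_{i_0} ⋯ (q;q)_{i_{D-1}} (q;q)_{L - ∑ i})` of the multisums. -/
noncomputable def chainTerm {D : ℕ} (q : ℂ) (L : ℕ) (i : Fin D → ℕ) : ℂ :=
  q ^ chainSqNorm i * (∏ j, qFactInv q (i j)) * qFactInv q (L - (∑ j, i j : ℕ))

section Chain

variable {D : ℕ}

lemma chainWeight_cons (a : ℕ) (i : Fin D → ℕ) :
    chainWeight (Fin.cons a i : Fin (D + 1) → ℕ) = a + ∑ j, i j + chainWeight i := by
  simp only [chainWeight, Fin.sum_univ_succ, Fin.cons_zero, Fin.cons_succ, Fin.val_zero, zero_add,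
    one_mul, Fin.val_succ, add_assoc a, ← sum_add_distrib]
  congr 1
  exact sum_congr rfl fun j _ => by ring

lemma sum_le_chainWeight (i : Fin D → ℕ) : ∑ j, i j ≤ chainWeight i :=
  sum_le_sum fun j _ => Nat.le_mul_of_pos_left _ j.val.succ_pos

lemma chainSqNorm_cons (a : ℕ) (i : Fin D → ℕ) :
    chainSqNorm (Fin.cons a i : Fin (D + 1) → ℕ) = (a + ∑ j, i j) ^ 2 + chainSqNorm i := by
  simp [chainSqNorm, sum_range_succ', sum_filter, Fin.sum_univ_succ, add_comm]

lemma chainTerm_cons (q : ℂ) {L N : ℕ} (a : ℕ) (i : Fin D → ℕ) (hN : a + ∑ j, i j = N) :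
    chainTerm q L (Fin.cons a i : Fin (D + 1) → ℕ)
      = q ^ N ^ 2 * qFactInv q (L - N) * chainTerm q N i := by
  have ha : (N : ℤ) - (∑ j, i j : ℕ) = a := by lia
  rw [chainTerm, chainTerm, chainSqNorm_cons, Fin.sum_cons, Fin.prod_univ_succ, ha, hN, pow_add]
  simp only [Fin.cons_zero, Fin.cons_succ]
  ring

lemma chainTerm_eq_zero (q : ℂ) {L : ℕ} {i : Fin D → ℕ} (h : L < ∑ j, i j) :
    chainTerm q L i = 0 := by
  rw [chainTerm, qFactInv_of_neg q (by lia), mul_zero]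

lemma le_of_chainTerm_ne_zero {q : ℂ} {L : ℕ} {i : Fin D → ℕ} (h : chainTerm q L i ≠ 0) :
    i ≤ fun _ => L := fun j =>
  (single_le_sum_of_canonicallyOrdered (mem_univ j)).trans
    (not_lt.mp fun hL => h (chainTerm_eq_zero q hL))

lemma chainTerm_zero_left (q : ℂ) (i : Fin D → ℕ) :
    chainTerm q 0 i = if i = 0 then 1 else 0 := by
  split_ifs with hi
  · subst hi
    simp [chainTerm, chainSqNorm, qFactInv]
  · exact of_not_not fun h => hi (le_antisymm (le_of_chainTerm_ne_zero h) zero_le)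

lemma hasFiniteSupport_mul_chainTerm (f : ℕ → ℂ) (g : (Fin D → ℕ) → ℂ) (q : ℂ) (L : ℕ) :
    (fun p : ℕ × (Fin D → ℕ) =>
      f p.1 * qFactInv q (L - p.1) * (g p.2 * chainTerm q p.1 p.2)).HasFiniteSupport := by
  refine ((Set.finite_Iic L).prod (Set.finite_Iic fun _ : Fin D => L)).subset fun ⟨N, i⟩ hp => ?_
  have hN : N ≤ L := not_lt.mp fun hN => hp <| by
    simp only [qFactInv_of_neg q (show (L : ℤ) - N < 0 by lia), mul_zero, zero_mul]
  have hi := le_of_chainTerm_ne_zero (right_ne_zero_of_mul (right_ne_zero_of_mul hp))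
  exact ⟨hN, hi.trans fun _ => hN⟩

lemma tsum_prod_eq_tsum_cons {M : Type*} [AddCommMonoid M] [TopologicalSpace M]
    {f : ℕ → (Fin D → ℕ) → M} (hf : ∀ N i, N < ∑ j, i j → f N i = 0) :
    ∑' p : ℕ × (Fin D → ℕ), f p.1 p.2
      = ∑' i : Fin (D + 1) → ℕ, f (∑ j, i j) (Fin.tail i) := by
  have injective : Function.Injective
      fun i : Fin (D + 1) → ℕ => (∑ j, i j, Fin.tail i) := by
    intro i k h
    obtain ⟨hsum, htail⟩ := Prod.mk.inj h
    rw [← Fin.cons_self_tail i, ← Fin.cons_self_tail k, htail, Fin.sum_cons, Fin.sum_cons] at hsum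
    rw [← Fin.cons_self_tail i, ← Fin.cons_self_tail k, htail, Nat.add_right_cancel hsum]
  refine (injective.tsum_eq fun ⟨N, i⟩ hp => ?_).symm
  have hN : ∑ j, i j ≤ N := not_lt.mp fun hN => hp (hf N i hN)
  exact ⟨Fin.cons (N - ∑ j, i j) i, by simp [Fin.sum_cons, Nat.sub_add_cancel hN]⟩

theorem iterate_baileyStep_eq_tsum (q a : ℂ) (D L : ℕ) :
    (baileyStep q a)^[D + 1] (Pi.single 0 1) L
      = ∑' i : Fin D → ℕ, a ^ chainWeight i * chainTerm q L i := by
  induction D generalizing L with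
  | zero =>
    rw [zero_add, Function.iterate_one, baileyStep, sum_eq_single_of_mem 0 (by simp)
      fun N _ hN => by rw [Pi.single_eq_of_ne hN, mul_zero], tsum_fintype]
    simp [chainWeight, chainTerm, chainSqNorm, qFactInv_natCast]
  | succ D ih =>
    let h : ℕ → (Fin D → ℕ) → ℂ := fun N i => a ^ N * q ^ N ^ 2 * qFactInv q (L - N) *
      (a ^ chainWeight i * chainTerm q N i)
    have summable : Summable fun p : ℕ × (Fin D → ℕ) => h p.1 p.2 :=
      summable_of_hasFiniteSupport <| hasFiniteSupport_mul_chainTerm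
        (fun N => a ^ N * q ^ N ^ 2) (fun i => a ^ chainWeight i) q L
    calc (baileyStep q a)^[D + 1 + 1] (Pi.single 0 1) L
        = ∑ N ∈ range (L + 1), ∑' i, h N i := by
          rw [Function.iterate_succ_apply']
          refine sum_congr rfl fun N hN => ?_
          rw [ih, ← tsum_mul_left, div_eq_mul_inv,
            ← qFactInv_natCast_sub q (Nat.lt_succ_iff.mp (mem_range.mp hN))]
      _ = ∑' p : ℕ × (Fin D → ℕ), h p.1 p.2 := by
          rw [summable.tsum_prod]
          refine (tsum_eq_sum fun N hN => ?_).symm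
          rw [mem_range, Nat.lt_succ_iff, not_le] at hN
          simp only [h, qFactInv_of_neg q (show (L : ℤ) - N < 0 by lia), mul_zero, zero_mul,
            tsum_zero]
      _ = ∑' i : Fin (D + 1) → ℕ, h (∑ j, i j) (Fin.tail i) :=
          tsum_prod_eq_tsum_cons fun N i hN => by simp only [h, chainTerm_eq_zero q hN, mul_zero]
      _ = ∑' i : Fin (D + 1) → ℕ, a ^ chainWeight i * chainTerm q L i := by
          refine tsum_congr fun i => ?_
          cases i using Fin.consCases with
          | cons b i =>
            rw [chainWeight_cons, chainTerm_cons q b i rfl, Fin.tail_cons, Fin.sum_cons, pow_add]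
            simp only [h]
            ring

end Chain

/-! ### The polynomials `f^k_{m,l}` -/

lemma fpoly_eq_mul_tsum (d : ℕ) (q : ℂ) (m l : ℕ) :
    fpoly (d + 2) q m l = qPoch q q l * ∑' t : Fin d → ℕ,
      q ^ ((chainSqNorm t : ℤ) + (m - l - chainWeight t) ^ 2) * (∏ j, qFactInv q (t j)) *
        qFactInv q (m - l - chainWeight t - (∑ j, t j : ℕ)) *
        qFactInv q (2 * l + chainWeight t - m) := by
  have weight (t : Fin d → ℕ) :
      ∑ j, ((j.val : ℤ) + 2) * t j = chainWeight t + (∑ j, t j : ℕ) := by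
    push_cast [chainWeight]
    rw [← sum_add_distrib]
    exact sum_congr rfl fun j _ => by ring
  rw [← tsum_mul_left]
  refine tsum_congr fun (t : Fin d → ℕ) => ?_
  change q ^ ((∑ s ∈ range d, (∑ j with s ≤ j.val, (t j : ℤ)) ^ 2) +
    (m - l - ∑ j, ((j.val : ℤ) + 2) * t j + ∑ j, (t j : ℤ)) ^ 2) * qPoch q q l *
      (∏ j, qFactInv q (t j)) * qFactInv q (m - l - ∑ j, ((j.val : ℤ) + 2) * t j) *
      qFactInv q (2 * l + ∑ j, ((j.val : ℤ) + 1) * t j - m) = _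
  rw [weight, chainSqNorm]
  push_cast [chainWeight]
  rw [sub_add_eq_sub_sub, sub_add_cancel]
  ring

theorem fpoly_div_qPoch {d l : ℕ} {q : ℂ} (hl : qPoch q q l ≠ 0) (m : ℕ) :
    fpoly (d + 2) q m l / qPoch q q l
      = ∑' i : {i : Fin (d + 1) → ℕ // l + chainWeight i = m}, chainTerm q l i.1 := by
  have tail_injective : Function.Injective
      fun i : {i : Fin (d + 1) → ℕ // l + chainWeight i = m} => Fin.tail i.1 := by
    rintro ⟨i, hi⟩ ⟨k, hk⟩ htail
    cases i using Fin.consCases with | cons a t =>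
    cases k using Fin.consCases with | cons b u =>
    obtain rfl : t = u := htail
    rw [chainWeight_cons] at hi hk
    congr 2
    lia
  rw [fpoly_eq_mul_tsum, mul_div_cancel_left₀ _ hl, ← tail_injective.tsum_eq]
  · refine tsum_congr fun ⟨i, hi⟩ => ?_
    cases i using Fin.consCases with | cons a t =>
    rw [chainWeight_cons] at hi
    rw [Fin.tail_cons, chainTerm_cons q a t rfl, chainTerm,
      show (m : ℤ) - l - chainWeight t = (a + ∑ j, t j : ℕ) by lia,
      show 2 * (l : ℤ) + chainWeight t - m = l - (a + ∑ j, t j : ℕ) by lia]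
    norm_cast
    rw [pow_add]
    ring
  · intro t ht
    have nonneg : 0 ≤ (m : ℤ) - l - chainWeight t - (∑ j, t j : ℕ) := not_lt.mp fun hneg =>
      ht (by simp only [qFactInv_of_neg q hneg, mul_zero, zero_mul])
    obtain ⟨a, ha⟩ := Int.eq_ofNat_of_zero_le nonneg
    exact ⟨⟨Fin.cons a t, by rw [chainWeight_cons]; lia⟩, Fin.tail_cons _ _⟩

lemma summable_prod_pi {α : Type*} {f : α → ℝ} (hf : Summable f) (hf0 : 0 ≤ f) (D : ℕ) :
    Summable fun i : Fin D → α => ∏ j, f (i j) := by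
  induction D with
  | zero => exact .of_finite
  | succ D ih =>
    rw [← (Fin.consEquiv fun _ => α).summable_iff]
    refine (hf.mul_of_nonneg ih hf0 fun i => prod_nonneg fun j _ => hf0 (i j)).congr ?_
    rintro ⟨a, i⟩
    exact (Fin.prod_univ_succ fun j => f ((Fin.cons a i : Fin (D + 1) → α) j)).symm

lemma exists_norm_qFactInv_le {q : ℂ} (hq : ‖q‖ < 1) : ∃ B, ∀ n, ‖qFactInv q n‖ ≤ B := by
  obtain ⟨B, hB⟩ := exists_norm_inv_qPoch_self_le hq
  refine ⟨B, fun n => ?_⟩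
  rw [qFactInv]
  split_ifs
  · exact hB _
  · exact norm_zero.trans_le ((norm_nonneg _).trans (hB 0))

lemma exists_norm_pow_chainWeight_mul_chainTerm_le {q : ℂ} (hq : ‖q‖ < 1) :
    ∃ B, ∀ {D : ℕ} (L : ℕ) (i : Fin D → ℕ),
      ‖q ^ chainWeight i * chainTerm q L i‖ ≤ (∏ j, B * ‖q‖ ^ i j) * B := by
  obtain ⟨B, hB⟩ := exists_norm_qFactInv_le hq
  have hB0 : 0 ≤ B := (norm_nonneg _).trans (hB 0)
  refine ⟨B, fun {D} L i => ?_⟩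
  rw [chainTerm, norm_mul, norm_mul, norm_mul, norm_pow, norm_pow, norm_prod]
  calc ‖q‖ ^ chainWeight i * (‖q‖ ^ chainSqNorm i * (∏ j, ‖qFactInv q (i j)‖) *
        ‖qFactInv q (L - (∑ j, i j : ℕ))‖)
      ≤ ‖q‖ ^ (∑ j, i j) * (1 * (∏ _j : Fin D, B) * B) := by
        gcongr ?_ * (?_ * (∏ j, ?_) * ?_)
        · exact pow_le_pow_of_le_one (norm_nonneg q) hq.le (sum_le_chainWeight i)
        · exact pow_le_one₀ (norm_nonneg q) hq.le
        · exact hB _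
        · exact hB _
    _ = (∏ j, B * ‖q‖ ^ i j) * B := by
        rw [prod_mul_distrib, prod_pow_eq_pow_sum]
        ring

lemma summable_pow_mul_rogersSzego_mul_chainTerm {q : ℂ} (hq : ‖q‖ < 1) (D : ℕ) :
    Summable fun p : ℕ × (Fin D → ℕ) =>
      q ^ p.1 * rogersSzego q (2 * p.1) * (q ^ chainWeight p.2 * chainTerm q p.1 p.2) := by
  obtain ⟨B, hB⟩ := exists_norm_pow_chainWeight_mul_chainTerm_le hq
  obtain ⟨C, hC⟩ := exists_norm_rogersSzego_le hq
  have hC0 : 0 ≤ C := (norm_nonneg _).trans ((hC 0).trans (by simp))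
  have hB0 : 0 ≤ B := (norm_nonneg _).trans ((hB 0 Fin.elim0).trans (by simp))
  have summable_left :=
    (summable_add_one_pow_mul_geometric (norm_nonneg q) hq 1).mul_left (2 * C)
  have summable_right := (summable_prod_pi ((summable_geometric_of_lt_one (norm_nonneg q)
    hq).mul_left B) (fun n => by positivity) D).mul_right B
  refine .of_norm_bounded (summable_left.mul_of_nonneg summable_right (fun l => by positivity)
    fun i => by positivity) fun p => ?_
  have left : ‖q ^ p.1 * rogersSzego q (2 * p.1)‖ ≤ 2 * C * ((p.1 + 1) ^ 1 * ‖q‖ ^ p.1) := by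
    rw [norm_mul, norm_pow]
    calc ‖q‖ ^ p.1 * ‖rogersSzego q (2 * p.1)‖ ≤ ‖q‖ ^ p.1 * (C * (2 * (p.1 + 1))) := by
          gcongr
          refine (hC (2 * p.1)).trans ?_
          push_cast
          gcongr
          linarith
      _ = 2 * C * ((p.1 + 1) ^ 1 * ‖q‖ ^ p.1) := by ring
  exact (norm_mul_le _ _).trans (mul_le_mul left (hB p.1 p.2) (norm_nonneg _) (by positivity))

lemma hasSum_sum_tsum_fiber {ι E : Type*} [NormedAddCommGroup E] [CompleteSpace E] (w : ι → ℕ)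
    {g : ℕ × ι → E} (hg : Summable g) :
    HasSum (fun m => ∑ l ∈ range (m + 1), ∑' i : {i // l + w i = m}, g (l, i)) (∑' p, g p) := by
  refine (hg.hasSum.tsum_fiberwise fun p => p.1 + w p.2).congr_fun fun m => ?_
  rw [_root_.tsum_subtype, (hg.indicator _).tsum_prod, tsum_eq_sum (s := range (m + 1))]
  · refine sum_congr rfl fun l _ => ?_
    exact _root_.tsum_subtype {i | l + w i = m} fun i => g (l, i)
  · intro l hl
    rw [mem_range, Nat.lt_succ_iff, not_le] at hl
    rw [tsum_congr fun i => Set.indicator_of_notMem (a := (l, i)) (fun hi => ?_) g, tsum_zero]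
    exact (hl.trans_le (Nat.le_add_right l (w i))).ne' hi

theorem hasSum_fpoly {q : ℂ} (hq : ‖q‖ < 1) (d : ℕ) :
    HasSum (fun m : ℕ => q ^ m *
        ∑ l ∈ range (m + 1), fpoly (d + 2) q m l / qPoch q q l * rogersSzego q (2 * l))
      (∑' l, (baileyStep q q)^[d + 2] (Pi.single 0 1) l * (q ^ l * rogersSzego q (2 * l))) := by
  let g : ℕ × (Fin (d + 1) → ℕ) → ℂ := fun p =>
    q ^ p.1 * rogersSzego q (2 * p.1) * (q ^ chainWeight p.2 * chainTerm q p.1 p.2)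
  have summable : Summable g := summable_pow_mul_rogersSzego_mul_chainTerm hq (d + 1)
  have tsum_eq : ∑' p, g p
      = ∑' l, (baileyStep q q)^[d + 2] (Pi.single 0 1) l * (q ^ l * rogersSzego q (2 * l)) := by
    rw [summable.tsum_prod]
    refine tsum_congr fun l => ?_
    rw [iterate_baileyStep_eq_tsum q q (d + 1), ← tsum_mul_right]
    exact tsum_congr fun i => mul_comm _ _
  rw [← tsum_eq]
  refine (hasSum_sum_tsum_fiber chainWeight summable).congr_fun fun m => ?_
  rw [mul_sum]
  refine sum_congr rfl fun l _ => ?_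
  rw [fpoly_div_qPoch (qPoch_self_ne_zero hq l), ← mul_assoc, ← tsum_mul_left, ← tsum_mul_right]
  refine tsum_congr fun ⟨i, hi⟩ => ?_
  simp only [g, ← hi, pow_add]
  ring

lemma fpoly_zero_right (d : ℕ) (q : ℂ) (m : ℕ) :
    fpoly (d + 2) q m 0 = if m = 0 then 1 else 0 := by
  have h := fpoly_div_qPoch (d := d) (l := 0) (q := q) (by simp) m
  rw [qPoch_zero, div_one, Nat.cast_zero] at h
  rw [h]
  split_ifs with hm
  · rw [tsum_eq_single ⟨0, by simp [chainWeight, hm]⟩ fun i hi => ?_]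
    · simp [chainTerm_zero_left]
    · rw [chainTerm_zero_left, if_neg fun h0 => hi (Subtype.ext h0)]
  · refine (tsum_congr fun ⟨i, hi⟩ => ?_).trans tsum_zero
    rw [chainTerm_zero_left, if_neg]
    rintro rfl
    exact hm (by simpa [chainWeight] using hi.symm)

/-- `((q^{2n+1};q^{2n+1})_∞/(q;q)_∞)^3
    = 1 + Σ_{m≥1} q^m Σ_{l=1}^{m} (f^n_{m,l}(q)/(q;q)_l) Σ_{k=0}^{2l} [2l choose k]_q`. -/
theorem statement10 (n : ℕ) (hn : 2 ≤ n) (q : ℂ) (hq0 : 0 < ‖q‖) (hq1 : ‖q‖ < 1) :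
    (qPochInf (q ^ (2 * n + 1)) (q ^ (2 * n + 1)) / qPochInf q q) ^ 3
      = 1 + ∑' m : ℕ, q ^ m *
          ∑ l ∈ Finset.Icc 1 m, fpoly n q (m : ℤ) (l : ℤ) / qPoch q q l *
            ∑ k ∈ Finset.range (2 * l + 1), qBinom q (2 * (l : ℤ)) (k : ℤ) := by
  obtain ⟨d, rfl⟩ := Nat.exists_eq_add_of_le' hn
  have hasSum := hasSum_fpoly hq1 d
  rw [tsum_iterate_baileyStep_mul_rogersSzego_eq_div hq1] at hasSum
  rw [← sub_eq_iff_eq_add', ← (hasSum.sub (hasSum_ite_eq 0 1)).tsum_eq]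
  refine tsum_congr fun m => ?_
  rw [sum_range_eq_add_Ico _ m.succ_pos, mul_add, Nat.cast_zero, fpoly_zero_right]
  have constant_term : q ^ m * ((if m = 0 then 1 else 0) / qPoch q q 0 * rogersSzego q (2 * 0))
      = if m = 0 then 1 else 0 := by
    split_ifs with hm <;> simp [rogersSzego, qBinom, qFactInv, *]
  rw [constant_term, add_sub_cancel_left]
  rfl
end

section
/- Let W be a weighted set consisting of exactly 3 elements of weight 0 and exactly 4 elements of weight i for each integer i ≥ 1 (corresponding to the variables X_0, Y_0, Z_0 and X_i, Y_i, Z_i, J_i for i ≥ 1). For every integer ℓ ≥ 1, the number of multisets of cardinality 3 of elements of W whose weights sum to ℓ equals 24 + 64·⌊((ℓ−3)^2 + 6)/12⌋ + 20·⌊(ℓ−1)/3⌋ + 58·⌊(ℓ−1)/2⌋ − 20·⌊ℓ/3⌋ + 30·⌊ℓ/2⌋. -/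
/-!
Mark one element of a multiset `s` of size `n` by choosing `a` and `k < s.count a`; there are `n`
choices. Removing `k + 1` copies of `a` from `s` determines the marked multiset, and this gives
Newton's identity `n * h n = ∑ p (k + 1) * h (n - (k + 1))` between the power sums and the complete
homogeneous symmetric functions of the variables `X ^ w a`, read off coefficientwise.

In `W` there are `4` elements of every weight, with one missing in weight `0`, so that each sum over
`W` is `4` times a sum over weights, minus one term. Newton's identity for `n = 2` and `n = 3` then
yields the number of triples as a quadratic polynomial plus corrections depending on `ℓ` modulo `2`
and `3`, which is compared with the floors modulo `6`.
-/

open Finset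

/-- The weighted set `W` with exactly 3 elements of weight 0 (namely `X₀, Y₀, Z₀`)
    and exactly 4 elements of weight `i` for each `i ≥ 1` (namely `Xᵢ, Yᵢ, Zᵢ, Jᵢ`):
    the element `⟨(i, j), _⟩` has weight `i`. -/
def Wvar : Type := {p : ℕ × ℕ // p.2 < if p.1 = 0 then 3 else 4}

/-- The weight of an element of `W`. -/
def Wweight (x : Wvar) : ℕ := x.1.1

section Newton

variable {α : Type*} (w : α → ℕ)

/-- The multisets of `n` elements of total weight `l`. -/
abbrev WMultiset (n l : ℕ) : Type _ := {s : Multiset α // s.card = n ∧ (s.map w).sum = l}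

/-- The number of multisets of `n` elements of total weight `l`, i.e. the coefficient of `X ^ l` in
the complete homogeneous symmetric function of degree `n` evaluated at the `X ^ w a`. It is `0` by
convention if there are infinitely many such multisets. -/
noncomputable def multisetCount (n l : ℕ) : ℕ := Nat.card (WMultiset w n l)

instance finite_wMultiset [∀ i, Finite (w ⁻¹' {i})] (n l : ℕ) :
    Finite (WMultiset w n l) := by
  classical
  have hU : (w ⁻¹' Set.Iic l).Finite :=
    (Set.finite_Iic l).preimage' fun i _ ↦ Set.toFinite (w ⁻¹' {i})
  refine ((Set.finite_Iic (n • hU.toFinset.val)).subset ?_).to_subtype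
  rintro s ⟨hs, hw⟩
  refine Multiset.le_iff_count.2 fun a ↦ ?_
  by_cases ha : a ∈ s
  · have : w a ≤ l := hw ▸ Multiset.single_le_sum (by simp) _ (Multiset.mem_map_of_mem w ha)
    rw [Multiset.count_nsmul, Multiset.count_eq_one_of_mem hU.toFinset.nodup (by simpa using this)]
    simpa [hs] using s.count_le_card a
  · simp [ha]

theorem card_sub_replicate [DecidableEq α] {s : Multiset α} {a : α} {k : ℕ} (hk : k ≤ s.count a) :
    (s - Multiset.replicate k a).card = s.card - k := by
  rw [Multiset.card_sub (Multiset.le_count_iff_replicate_le.1 hk), Multiset.card_replicate]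

theorem sum_map_sub_replicate_add [DecidableEq α] {s : Multiset α} {a : α} {k : ℕ}
    (hk : k ≤ s.count a) :
    ((s - Multiset.replicate k a).map w).sum + k * w a = (s.map w).sum := by
  conv_rhs => rw [← Multiset.sub_add_cancel (Multiset.le_count_iff_replicate_le.1 hk)]
  rw [Multiset.map_add, Multiset.map_replicate, Multiset.sum_add, Multiset.sum_replicate,
    smul_eq_mul]

/-- Encodes Newton's identity: a multiset `s` with a marked pair `(a, k)`, `k < s.count a`,
corresponds to what remains of `s` after removing `k + 1` copies of `a`. The elements `a` are sorted
by their weight `i`. -/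
def removeCopiesEquiv [DecidableEq α] (n l : ℕ) :
    (Σ s : WMultiset w n l, s.1.toEnumFinset) ≃
      Σ k : Fin n, Σ i : Fin (l / (k + 1) + 1),
        (w ⁻¹' {i.1}) × WMultiset w (n - (k + 1)) (l - (k + 1) * i) where
  toFun := fun ⟨⟨s, hs⟩, ⟨⟨a, k⟩, hmem⟩⟩ ↦
    have hk : k < s.count a := s.mem_toEnumFinset _ |>.1 hmem
    have hsum : ((s - Multiset.replicate (k + 1) a).map w).sum + (k + 1) * w a = l :=
      (sum_map_sub_replicate_add w hk).trans hs.2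
    ⟨⟨k, hk.trans_le (hs.1 ▸ s.count_le_card a)⟩,
      ⟨w a, Nat.lt_succ_of_le ((Nat.le_div_iff_mul_le k.succ_pos).2 (by lia))⟩, ⟨a, rfl⟩,
      ⟨s - Multiset.replicate (k + 1) a,
        (card_sub_replicate hk).trans (congrArg (· - (k + 1)) hs.1), Nat.eq_sub_of_add_eq hsum⟩⟩
  invFun := fun ⟨⟨k, hk⟩, i, ⟨a, ha⟩, ⟨s, hs⟩⟩ ↦
    have hi : (k + 1) * i ≤ l := (Nat.mul_le_mul_left _ i.is_le).trans (Nat.mul_div_le l _)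
    ⟨⟨s + Multiset.replicate (k + 1) a, by
        rw [Multiset.card_add, Multiset.card_replicate, hs.1, Nat.sub_add_cancel hk], by
        rw [Multiset.map_add, Multiset.map_replicate, Multiset.sum_add, Multiset.sum_replicate,
          smul_eq_mul, hs.2, show w a = i from ha, Nat.sub_add_cancel hi]⟩,
      ⟨(a, k), by
        rw [Multiset.mem_toEnumFinset, Multiset.count_add, Multiset.count_replicate_self]
        lia⟩⟩
  left_inv := by
    rintro ⟨⟨s, hs⟩, ⟨⟨a, k⟩, hmem⟩⟩
    have hk : k + 1 ≤ s.count a := s.mem_toEnumFinset _ |>.1 hmem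
    exact Sigma.subtype_ext (p := fun (s : WMultiset w n l) p ↦ p ∈ s.1.toEnumFinset)
      (Subtype.ext (Multiset.sub_add_cancel (Multiset.le_count_iff_replicate_le.1 hk))) rfl
  right_inv := by
    rintro ⟨⟨k, hk⟩, ⟨i, hi⟩, ⟨a, ha⟩, ⟨s, hs⟩⟩
    obtain rfl : w a = i := ha
    simp only [Multiset.add_sub_cancel_right]

theorem mul_multisetCount [∀ i, Finite (w ⁻¹' {i})] (n l : ℕ) :
    n * multisetCount w n l = ∑ k ∈ range n, ∑ i ∈ range (l / (k + 1) + 1),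
      Nat.card (w ⁻¹' {i}) * multisetCount w (n - (k + 1)) (l - (k + 1) * i) := by
  classical
  have := Fintype.ofFinite (WMultiset w n l)
  have hcard (s : WMultiset w n l) : Nat.card s.1.toEnumFinset = n := by
    rw [Nat.card_eq_finsetCard, Multiset.card_toEnumFinset, s.2.1]
  calc n * multisetCount w n l = Nat.card (Σ s : WMultiset w n l, s.1.toEnumFinset) := by
        rw [Nat.card_sigma, sum_congr rfl fun s _ ↦ hcard s, sum_const, card_univ, smul_eq_mul,
          mul_comm, multisetCount, Nat.card_eq_fintype_card]
    _ = ∑ k : Fin n, ∑ i : Fin (l / (k + 1) + 1),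
          Nat.card (w ⁻¹' {i.1}) * multisetCount w (n - (k + 1)) (l - (k + 1) * i) := by
        simp only [Nat.card_congr (removeCopiesEquiv w n l), Nat.card_sigma, Nat.card_prod,
          multisetCount]
    _ = ∑ k ∈ range n, ∑ i ∈ range (l / (k + 1) + 1),
          Nat.card (w ⁻¹' {i}) * multisetCount w (n - (k + 1)) (l - (k + 1) * i) := by
        simp only [Finset.sum_range]

theorem multisetCount_zero (l : ℕ) : multisetCount w 0 l = if l = 0 then 1 else 0 := by
  split_ifs with hl
  · subst hl
    exact Nat.card_eq_one_iff_exists.2 ⟨⟨0, by simp⟩, fun ⟨s, hs⟩ ↦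
      Subtype.ext (Multiset.card_eq_zero.1 hs.1)⟩
  · have : IsEmpty {s : Multiset α // s.card = 0 ∧ (s.map w).sum = l} :=
      ⟨fun ⟨s, hs, hw⟩ ↦ hl (by simp [← hw, Multiset.card_eq_zero.1 hs])⟩
    exact Nat.card_of_isEmpty

theorem sum_mul_multisetCount_zero {k : ℕ} (hk : 0 < k) (l : ℕ) (f : ℕ → ℕ) :
    ∑ i ∈ range (l / k + 1), f i * multisetCount w 0 (l - k * i) =
      if k ∣ l then f (l / k) else 0 := by
  have below : ∀ i ∈ range (l / k), f i * multisetCount w 0 (l - k * i) = 0 := by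
    intro i hi
    have hlt : k * i < l :=
      (Nat.mul_lt_mul_of_pos_left (mem_range.1 hi) hk).trans_le (Nat.mul_div_le l k)
    rw [multisetCount_zero, if_neg (Nat.sub_ne_zero_of_lt hlt), mul_zero]
  rw [sum_range_succ, sum_eq_zero below, zero_add, multisetCount_zero, ← Nat.mod_eq_sub_mul_div,
    mul_ite, mul_one, mul_zero, if_congr Nat.dvd_iff_mod_eq_zero.symm rfl rfl]

variable [∀ i, Finite (w ⁻¹' {i})]

theorem multisetCount_one (l : ℕ) : multisetCount w 1 l = Nat.card (w ⁻¹' {l}) := by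
  have newton := mul_multisetCount w 1 l
  rwa [one_mul, sum_range_one, zero_add,
    sum_mul_multisetCount_zero w one_pos l fun i ↦ Nat.card (w ⁻¹' {i}), if_pos (one_dvd l),
    Nat.div_one] at newton

theorem two_mul_multisetCount_two (l : ℕ) :
    2 * multisetCount w 2 l =
      ∑ i ∈ range (l + 1), Nat.card (w ⁻¹' {i}) * Nat.card (w ⁻¹' {l - i}) +
        if 2 ∣ l then Nat.card (w ⁻¹' {l / 2}) else 0 := by
  rw [mul_multisetCount, sum_range_succ, sum_range_one,
    ← sum_mul_multisetCount_zero w two_pos l fun i ↦ Nat.card (w ⁻¹' {i})]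
  simp only [zero_add, Nat.reduceAdd, Nat.reduceSub, Nat.div_one, one_mul, multisetCount_one]

theorem three_mul_multisetCount_three (l : ℕ) :
    3 * multisetCount w 3 l =
      ∑ i ∈ range (l + 1), Nat.card (w ⁻¹' {i}) * multisetCount w 2 (l - i) +
        ∑ i ∈ range (l / 2 + 1), Nat.card (w ⁻¹' {i}) * Nat.card (w ⁻¹' {l - 2 * i}) +
        if 3 ∣ l then Nat.card (w ⁻¹' {l / 3}) else 0 := by
  rw [mul_multisetCount, sum_range_succ, sum_range_succ, sum_range_one,
    ← sum_mul_multisetCount_zero w three_pos l fun i ↦ Nat.card (w ⁻¹' {i})]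
  simp only [zero_add, Nat.reduceAdd, Nat.reduceSub, Nat.div_one, one_mul, multisetCount_one]

end Newton

/-- The weight function `w` takes the value `0` three times and every positive value four times, as
on the variables `Xᵢ`, `Yᵢ`, `Zᵢ`, `Jᵢ` without `J₀`. All that matters about `W` is this property of
`Wweight`. -/
def HasThreeFourFibers {α : Type*} (w : α → ℕ) : Prop :=
  ∀ i, Nat.card (w ⁻¹' {i}) = if i = 0 then 3 else 4

namespace HasThreeFourFibers

variable {α : Type*} {w : α → ℕ}

theorem finite_fiber (hw : HasThreeFourFibers w) (i : ℕ) : Finite (w ⁻¹' {i}) :=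
  Nat.finite_of_card_ne_zero (by rw [hw]; split_ifs <;> decide)

theorem card_fiber_add_ite (hw : HasThreeFourFibers w) (i : ℕ) :
    Nat.card (w ⁻¹' {i}) + (if i = 0 then 1 else 0) = 4 := by
  rw [hw]
  split_ifs <;> rfl

theorem sum_card_fiber_mul_add (hw : HasThreeFourFibers w) (n : ℕ) (f : ℕ → ℕ) :
    ∑ i ∈ range (n + 1), Nat.card (w ⁻¹' {i}) * f i + f 0 = 4 * ∑ i ∈ range (n + 1), f i := by
  have h : ∑ i ∈ range (n + 1), (if i = 0 then 1 else 0) * f i = f 0 := by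
    simp only [ite_mul, one_mul, zero_mul, sum_ite_eq', mem_range, Nat.succ_pos, if_true]
  rw [← h, ← sum_add_distrib, mul_sum]
  exact sum_congr rfl fun i _ ↦ by rw [← add_mul, hw.card_fiber_add_ite]

theorem sum_card_fiber_sub_mul_add_ite (hw : HasThreeFourFibers w) {k : ℕ} (hk : 0 < k) (l : ℕ) :
    ∑ i ∈ range (l / k + 1), Nat.card (w ⁻¹' {l - k * i}) + (if k ∣ l then 1 else 0) =
      4 * (l / k + 1) := by
  have h := sum_mul_multisetCount_zero w hk l 1
  simp only [Pi.one_apply, one_mul, multisetCount_zero] at h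
  rw [← h, ← sum_add_distrib, sum_congr rfl fun i _ ↦ hw.card_fiber_add_ite (l - k * i),
    sum_const, card_range, smul_eq_mul, mul_comm]

theorem multisetCount_two (hw : HasThreeFourFibers w) (l : ℕ) :
    multisetCount w 2 l = 8 * l + 4 + if 2 ∣ l then 2 else 0 := by
  have := hw.finite_fiber
  have newton := two_mul_multisetCount_two w l
  have pairs := hw.sum_card_fiber_mul_add l fun i ↦ Nat.card (w ⁻¹' {l - i})
  have total := hw.sum_card_fiber_sub_mul_add_ite one_pos l
  have whole := hw.card_fiber_add_ite l
  have half := hw.card_fiber_add_ite (l / 2)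
  simp only [one_mul, Nat.div_one, one_dvd, if_true, Nat.sub_zero] at pairs total
  split_ifs at * <;> lia

theorem sum_multisetCount_two (hw : HasThreeFourFibers w) (l : ℕ) :
    ∑ i ∈ range (l + 1), multisetCount w 2 i = 4 * (l + 1) ^ 2 + 2 * (l / 2 + 1) := by
  induction l with
  | zero => rw [sum_range_one, hw.multisetCount_two, if_pos (dvd_zero 2)]; rfl
  | succ l ih =>
    rw [sum_range_succ, ih, hw.multisetCount_two]
    split_ifs <;> lia

theorem three_mul_multisetCount_three_add_ite (hw : HasThreeFourFibers w) (l : ℕ) :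
    3 * multisetCount w 3 l + (if 2 ∣ l then 6 else 0) =
      16 * l ^ 2 + 24 * l + 32 + 24 * (l / 2) + if 3 ∣ l then 4 else 0 := by
  have := hw.finite_fiber
  have newton := three_mul_multisetCount_three w l
  have triples := hw.sum_card_fiber_mul_add l fun i ↦ multisetCount w 2 (l - i)
  have pairs := hw.sum_card_fiber_mul_add (l / 2) fun i ↦ Nat.card (w ⁻¹' {l - 2 * i})
  have total := hw.sum_card_fiber_sub_mul_add_ite two_pos l
  have whole := hw.card_fiber_add_ite l
  have third := hw.card_fiber_add_ite (l / 3)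
  rw [sum_flip fun i ↦ multisetCount w 2 i, hw.sum_multisetCount_two, Nat.sub_zero,
    hw.multisetCount_two] at triples
  rw [mul_zero, Nat.sub_zero] at pairs
  split_ifs at * <;> lia

end HasThreeFourFibers

theorem three_mul_ediv_formula_add_ite (l : ℤ) :
    3 * (24 + 64 * (((l - 3) ^ 2 + 6) / 12) + 20 * ((l - 1) / 3) + 58 * ((l - 1) / 2)
        - 20 * (l / 3) + 30 * (l / 2)) + (if 2 ∣ l then 6 else 0) =
      16 * l ^ 2 + 24 * l + 32 + 24 * (l / 2) + if 3 ∣ l then 4 else 0 := by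
  obtain ⟨q, r, hr, hr', rfl⟩ : ∃ q r : ℤ, 0 ≤ r ∧ r < 6 ∧ l = 6 * q + r :=
    ⟨l / 6, l % 6, by lia, by lia, by lia⟩
  have square : (6 * q + r - 3) ^ 2 + 6 =
      12 * (3 * q ^ 2 + q * (r - 3)) + ((r - 3) ^ 2 + 6) := by ring
  rw [square, Int.mul_add_ediv_left _ _ (by norm_num)]
  interval_cases r <;> split_ifs <;> ring_nf <;> omega

theorem floor_formula_eq_ediv_formula (l : ℤ) :
    24 + 64 * ⌊(((l : ℚ) - 3) ^ 2 + 6) / 12⌋ + 20 * ⌊((l : ℚ) - 1) / 3⌋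
        + 58 * ⌊((l : ℚ) - 1) / 2⌋ - 20 * ⌊(l : ℚ) / 3⌋ + 30 * ⌊(l : ℚ) / 2⌋ =
      24 + 64 * (((l - 3) ^ 2 + 6) / 12) + 20 * ((l - 1) / 3) + 58 * ((l - 1) / 2)
        - 20 * (l / 3) + 30 * (l / 2) := by
  have floor_div (a : ℤ) (d : ℕ) [d.AtLeastTwo] : ⌊(a : ℚ) / ofNat(d)⌋ = a / ofNat(d) :=
    Rat.floor_intCast_div_natCast a d
  simp only [← floor_div]
  push_cast
  rfl

theorem statement17_general {α : Type*} {w : α → ℕ} (hw : HasThreeFourFibers w) (l : ℕ) :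
    (multisetCount w 3 l : ℤ)
      = 24 + 64 * ⌊(((l : ℚ) - 3) ^ 2 + 6) / 12⌋ + 20 * ⌊((l : ℚ) - 1) / 3⌋
        + 58 * ⌊((l : ℚ) - 1) / 2⌋ - 20 * ⌊(l : ℚ) / 3⌋ + 30 * ⌊(l : ℚ) / 2⌋ := by
  have count := hw.three_mul_multisetCount_three_add_ite l
  have formula := three_mul_ediv_formula_add_ite l
  have floors := floor_formula_eq_ediv_formula l
  rw [Int.cast_natCast] at floors
  rw [floors]
  zify at count
  linarith

/-- The elements of `W` of weight `i`, numbered by their second component. -/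
def wweightFiberEquiv (i : ℕ) : Wweight ⁻¹' {i} ≃ Fin (if i = 0 then 3 else 4) where
  toFun := fun ⟨⟨(_, j), hj⟩, hx⟩ ↦ ⟨j, hx ▸ hj⟩
  invFun j := ⟨⟨(i, j), j.2⟩, rfl⟩
  left_inv := by
    rintro ⟨⟨⟨_, j⟩, hj⟩, rfl⟩
    rfl
  right_inv _ := rfl

theorem hasThreeFourFibers_wweight : HasThreeFourFibers Wweight := fun i ↦ by
  rw [Nat.card_congr (wweightFiberEquiv i), Nat.card_fin]

/-- For `ℓ ≥ 1`, the number of multisets of cardinality 3 of elements of `W` whose weights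
    sum to `ℓ` equals
    `24 + 64⌊((ℓ−3)²+6)/12⌋ + 20⌊(ℓ−1)/3⌋ + 58⌊(ℓ−1)/2⌋ − 20⌊ℓ/3⌋ + 30⌊ℓ/2⌋`. -/
theorem statement17 (ℓ : ℕ) (hℓ : 1 ≤ ℓ) :
    (Nat.card {s : Multiset Wvar //
        Multiset.card s = 3 ∧ (s.map Wweight).sum = ℓ} : ℤ)
      = 24 + 64 * ⌊((((ℓ : ℚ) - 3) ^ 2 + 6) / 12)⌋ + 20 * ⌊(((ℓ : ℚ) - 1) / 3)⌋
        + 58 * ⌊(((ℓ : ℚ) - 1) / 2)⌋ - 20 * ⌊((ℓ : ℚ) / 3)⌋ + 30 * ⌊((ℓ : ℚ) / 2)⌋ :=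
  statement17_general hasThreeFourFibers_wweight ℓ
end
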